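/- Let n ≥ 1 be an integer and θ > 0 a real number. Under the record-biased distribution with parameter θ on permutations of [n], the expected number of records equals ∑_{i=1}^{n} θ/(θ+i−1). Equivalently, ∑_{σ ∈ S_n} rec(σ) · θ^{rec(σ)} = ( ∑_{i=1}^{n} θ/(θ+i−1) ) · θ^{(n)}. -/

import Mathlib

/-!
A permutation `σ` of `Fin (n + 1)` is determined by its last value `p` together with the
permutation `τ` of `Fin n` giving the relative order of the other values (`insertLast`). Only
relative order matters for being a record, so the first `n` positions carry the records of `τ`,
and the last position is a record exactly when `p` is the maximum (`recs_insertLast`). Hence for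
every statistic `f`, `∑_σ f (rec σ) = ∑_τ (f (rec τ + 1) + n · f (rec τ))` (`sum_recs_succ`).
With `f k = θ ^ k` this gives the normalisation `Z (n + 1) = (θ + n) Z n`, the recursion of the
rising factorial; with `f k = k θ ^ k` it gives `E (n + 1) = (θ + n) E n + θ Z n`, which the
claimed formula satisfies.
-/


/-- The number of records of a permutation of `Fin n`. -/
def recs {n : ℕ} (σ : Equiv.Perm (Fin n)) : ℕ :=
  (Finset.univ.filter fun i : Fin n => ∀ j < i, σ j < σ i).card

/-- The permutation of `Fin (n + 1)` whose last value is `p` and whose other values are in the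
relative order prescribed by `τ`. -/
def insertLast {n : ℕ} (p : Fin (n + 1)) (τ : Equiv.Perm (Fin n)) : Equiv.Perm (Fin (n + 1)) :=
  (finSuccEquiv' (Fin.last n)).trans ((Equiv.optionCongr τ).trans (finSuccEquiv' p).symm)

lemma insertLast_last {n : ℕ} (p : Fin (n + 1)) (τ : Equiv.Perm (Fin n)) :
    insertLast p τ (Fin.last n) = p := by
  simp [insertLast]

lemma insertLast_castSucc {n : ℕ} (p : Fin (n + 1)) (τ : Equiv.Perm (Fin n)) (i : Fin n) :
    insertLast p τ i.castSucc = p.succAbove (τ i) := by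
  simp [insertLast, finSuccEquiv'_below (Fin.castSucc_lt_last i)]

/-- Injectivity suffices, since `(n + 1) * n! = (n + 1)!`. -/
lemma insertLast_bijective (n : ℕ) :
    Function.Bijective (fun x : Fin (n + 1) × Equiv.Perm (Fin n) => insertLast x.1 x.2) := by
  rw [Fintype.bijective_iff_injective_and_card]
  constructor
  · rintro ⟨p, τ⟩ ⟨q, υ⟩ h
    have hpq : p = q := by
      simpa [insertLast_last] using congrArg (fun σ => σ (Fin.last n)) h
    subst hpq
    congr 1
    ext i : 1
    have hi := congrArg (fun σ => σ i.castSucc) h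
    simpa [insertLast_castSucc] using hi
  · simp [Fintype.card_perm, Nat.factorial_succ]

lemma recs_insertLast {n : ℕ} (p : Fin (n + 1)) (τ : Equiv.Perm (Fin n)) :
    recs (insertLast p τ) = recs τ + if p = Fin.last n then 1 else 0 := by
  unfold recs
  rw [Finset.card_filter, Finset.card_filter, Fin.sum_univ_castSucc]
  congr 1
  · refine Finset.sum_congr rfl fun i _ => ?_
    congr 1
    simp [Fin.forall_fin_succ', insertLast_castSucc, insertLast_last,
      Fin.succAbove_lt_succAbove_iff, (Fin.castSucc_lt_last i).not_gt]
  · congr 1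
    simp only [Fin.forall_fin_succ', insertLast_castSucc, insertLast_last, lt_irrefl,
      false_imp_iff, and_true, Fin.castSucc_lt_last, true_imp_iff, eq_iff_iff]
    constructor
    · intro h
      by_contra hp
      -- Otherwise the maximum is the value at some earlier position `τ⁻¹ k`.
      obtain ⟨k, hk⟩ := Fin.exists_succAbove_eq (Ne.symm hp)
      have := h (τ.symm k)
      rw [Equiv.apply_symm_apply, hk] at this
      exact absurd this (Fin.le_last p).not_gt
    · rintro rfl i
      simp [Fin.succAbove_last, Fin.castSucc_lt_last]

/-- Among the `n + 1` possible last values, exactly one creates a new record. -/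
lemma sum_recs_succ (n : ℕ) (f : ℕ → ℝ) :
    ∑ σ : Equiv.Perm (Fin (n + 1)), f (recs σ)
      = ∑ τ : Equiv.Perm (Fin n), (f (recs τ + 1) + n * f (recs τ)) := by
  rw [← (insertLast_bijective n).sum_comp (fun σ => f (recs σ)), Fintype.sum_prod_type_right]
  refine Finset.sum_congr rfl fun τ _ => ?_
  rw [Fin.sum_univ_castSucc]
  simp [recs_insertLast, (Fin.castSucc_lt_last _).ne, add_comm]

/-- The normalising constant of the record-biased distribution is the rising factorial. -/
lemma sum_pow_recs (n : ℕ) (θ : ℝ) :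
    ∑ σ : Equiv.Perm (Fin n), θ ^ recs σ = (ascPochhammer ℝ n).eval θ := by
  induction n with
  | zero => simp [recs]
  | succ n ih =>
    rw [sum_recs_succ n (fun k => θ ^ k), ascPochhammer_succ_eval, ← ih, Finset.sum_mul]
    refine Finset.sum_congr rfl fun τ _ => ?_
    ring

/-- Under the record-biased distribution with parameter `θ` on permutations of `[n]`,
the expected number of records is `∑_{i=1}^{n} θ/(θ+i−1)`; equivalently
`∑_σ rec(σ) · θ^{rec(σ)} = (∑_{i=0}^{n-1} θ/(θ+i)) · θ^{(n)}`. -/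
theorem expected_records (n : ℕ) (hn : 1 ≤ n) (θ : ℝ) (hθ : 0 < θ) :
    ∑ σ : Equiv.Perm (Fin n), (recs σ : ℝ) * θ ^ recs σ
      = (∑ i ∈ Finset.range n, θ / (θ + i)) * (ascPochhammer ℝ n).eval θ := by
  -- The formula also holds for `n = 0`, which is the convenient base case.
  clear hn
  induction n with
  | zero => simp [recs]
  | succ n ih =>
    have key : ∑ σ : Equiv.Perm (Fin (n + 1)), (recs σ : ℝ) * θ ^ recs σ
        = (θ + n) * ∑ τ : Equiv.Perm (Fin n), (recs τ : ℝ) * θ ^ recs τ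
          + θ * ∑ τ : Equiv.Perm (Fin n), θ ^ recs τ := by
      rw [sum_recs_succ n (fun k => (k : ℝ) * θ ^ k), Finset.mul_sum, Finset.mul_sum,
        ← Finset.sum_add_distrib]
      refine Finset.sum_congr rfl fun τ _ => ?_
      push_cast
      ring
    have hne : θ + n ≠ 0 := by positivity
    rw [key, ih, sum_pow_recs, Finset.sum_range_succ, ascPochhammer_succ_eval]
    field_simp
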